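/- For every inverse temperature β ∈ (0,∞), every exponent q ∈ (0,2) and every range exponent α > 2 + q/2, there exists a constant c_β > 0 (depending only on β, α and q) such that for every integer N ≥ 1, the variance of the height at the origin under the discrete q-SOS long-range chain satisfies c_β N ≤ Var^{q-SOS}_{N,β,α}[φ(0)]. -/

import Mathlib

noncomputable section

/-- Configurations of the long-range chain of length `N`: integer-valued height functions
on `ℤ` vanishing outside `{-N, …, N}`. -/
def ChainConfig (N : ℕ) : Type :=
  {φ : ℤ → ℤ // ∀ k : ℤ, (N : ℤ) < |k| → φ k = 0}

/-- Energy `β ∑_{i ≠ j} |φ(i) − φ(j)|^q / |i − j|^α` of a configuration of the long-range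
chain with potential exponent `q` and range exponent `α`. -/
def chainEnergy (β α q : ℝ) (φ : ℤ → ℤ) : ℝ :=
  β * ∑' p : ℤ × ℤ,
      if p.1 = p.2 then 0
      else |((φ p.1 - φ p.2 : ℤ) : ℝ)| ^ q / |((p.1 - p.2 : ℤ) : ℝ)| ^ α

/-- Boltzmann weight of a configuration. -/
def chainWeight (β α q : ℝ) (φ : ℤ → ℤ) : ℝ :=
  Real.exp (-chainEnergy β α q φ)

/-- Partition function of the long-range chain. -/
def chainZ (N : ℕ) (β α q : ℝ) : ℝ :=
  ∑' φ : ChainConfig N, chainWeight β α q φ.val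

/-- Mean of the height at the origin. -/
def chainMean (N : ℕ) (β α q : ℝ) : ℝ :=
  (∑' φ : ChainConfig N, ((φ.val 0 : ℤ) : ℝ) * chainWeight β α q φ.val) / chainZ N β α q

/-- Variance of the height at the origin under the long-range chain `μ_{N,β,α}`
(with potential exponent `q`; `q = 2` is the discrete Gaussian chain,
`q ∈ (0,2)` the `q`-SOS chain). -/
def chainVar (N : ℕ) (β α q : ℝ) : ℝ :=
  (∑' φ : ChainConfig N, ((φ.val 0 : ℤ) : ℝ) ^ 2 * chainWeight β α q φ.val) / chainZ N β α q
    - chainMean N β α q ^ 2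

end

/-!
Write `β |x| ^ q / r ^ α = U_r(x) - R_r(x)` with `U_r(x) = β r ^ (-α) (r + x ^ 2) ^ (q / 2)`. The
error `R_r` is nonnegative and at most `β r ^ (-(α - q / 2))`, while the second differences of
`U_r` are at most `2 β r ^ (-(α - q / 2) - 1)`.

Expanding each `exp R_r = 1 + (exp R_r - 1)` presents the Boltzmann weight as a sum, over sets `S`
of activated bonds, of nonnegative weights. The weight of `S` relative to `exp (-∑ U_r)` is
invariant under raising the heights by one on `[-k, k]`, for every level `k ≤ N` that no bond of
`S` crosses. A Chapman–Robbins inequality along these shifts, each of which raises `φ(0)` by one,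
bounds the second moment of `φ(0)` below by a constant times the number of free levels: two shifts
interact only through the bonds crossing both levels, and a bond of length `r` crosses at most `r`
levels, so the interactions of one level are controlled by `∑ r ^ (-(α - q / 2))` over the bonds
crossing it. This sum is bounded uniformly in the level because `α - q / 2 > 2`, and the same sum
bounds the total error on these bonds, so each level is free with probability bounded below.

The argument is run for finite sets of bonds, for which the expansion is a finite sum; dominated
convergence then passes to the full interaction.
-/

open Finset Filter Topology

section ChapmanRobbins

variable {X κ : Type*} {m U h : X → ℝ} {e : κ → Equiv.Perm X} {c : κ → κ → ℝ}

/-- The unnormalised Gibbs weight of the energy `U` relative to the reference weight `m`. -/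
noncomputable def gibbsWeight (m U : X → ℝ) (x : X) : ℝ :=
  m x * Real.exp (-U x)

lemma gibbsWeight_nonneg (hm : ∀ x, 0 ≤ m x) (x : X) : 0 ≤ gibbsWeight m U x :=
  mul_nonneg (hm x) (Real.exp_pos _).le

/-- The discrete logarithmic derivative of the Gibbs weight along the shifts `e k`, `k ∈ G`:
the test function of the Chapman–Robbins inequality. -/
noncomputable def shiftScore (U : X → ℝ) (e : κ → Equiv.Perm X) (G : Finset κ) (x : X) : ℝ :=
  ∑ k ∈ G, (1 - Real.exp (U x - U (e k x)))

lemma gibbsWeight_mul_exp_sub {x y : X} (hxy : m y = m x) :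
    gibbsWeight m U x * Real.exp (U x - U y) = gibbsWeight m U y := by
  rw [gibbsWeight, gibbsWeight, hxy, mul_assoc, ← Real.exp_add]
  ring_nf

lemma gibbsWeight_mul_shiftScore {G : Finset κ} (hmi : ∀ k ∈ G, ∀ x, m (e k x) = m x) (x : X) :
    gibbsWeight m U x * shiftScore U e G x =
      ∑ k ∈ G, (gibbsWeight m U x - gibbsWeight m U (e k x)) := by
  rw [shiftScore, mul_sum]
  exact sum_congr rfl fun k hk => by rw [mul_sub, mul_one, gibbsWeight_mul_exp_sub (hmi k hk x)]

lemma gibbsWeight_mul_exp_mul_exp_le {x y z t : X} {a : ℝ} (hx : 0 ≤ m x) (ht : m t = m x)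
    (hU : U x + U t ≤ U y + U z + a) :
    gibbsWeight m U x * (Real.exp (U x - U y) * Real.exp (U x - U z)) ≤
      Real.exp a * gibbsWeight m U t := by
  rw [gibbsWeight, gibbsWeight, ht, mul_assoc, mul_left_comm (Real.exp _) (m x)]
  simp only [← Real.exp_add]
  exact mul_le_mul_of_nonneg_left (Real.exp_le_exp.2 (by linarith)) hx

lemma gibbsWeight_mul_shiftScore_sq_le {G : Finset κ} (hm : ∀ x, 0 ≤ m x)
    (hmi : ∀ k ∈ G, ∀ x, m (e k x) = m x)
    (hU : ∀ k l x, U x + U (e k (e l x)) ≤ U (e k x) + U (e l x) + c k l) (x : X) :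
    gibbsWeight m U x * shiftScore U e G x ^ 2 ≤
      ∑ k ∈ G, ∑ l ∈ G, (gibbsWeight m U x - gibbsWeight m U (e k x) - gibbsWeight m U (e l x) +
        Real.exp (c k l) * gibbsWeight m U (e k (e l x))) := by
  rw [shiftScore, sq, sum_mul_sum, mul_sum]
  refine sum_le_sum fun k hk => ?_
  rw [mul_sum]
  refine sum_le_sum fun l hl => ?_
  have m_shift_shift : m (e k (e l x)) = m x := by rw [hmi k hk, hmi l hl]
  rw [← gibbsWeight_mul_exp_sub (hmi k hk x), ← gibbsWeight_mul_exp_sub (hmi l hl x)]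
  linarith [gibbsWeight_mul_exp_mul_exp_le (hm x) m_shift_shift (hU k l x)]

lemma hasSum_sum_shift_curvature {w : X → ℝ} (hw : Summable w) (e : κ → Equiv.Perm X)
    (c : κ → κ → ℝ) (G : Finset κ) :
    HasSum (fun x => ∑ k ∈ G, ∑ l ∈ G,
        (w x - w (e k x) - w (e l x) + Real.exp (c k l) * w (e k (e l x))))
      ((∑ k ∈ G, ∑ l ∈ G, (Real.exp (c k l) - 1)) * ∑' x, w x) := by
  rw [sum_mul]
  refine hasSum_sum fun k _ => ?_
  rw [sum_mul]
  refine hasSum_sum fun l _ => ?_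
  have hasSum_shift (σ : Equiv.Perm X) : HasSum (fun x => w (σ x)) (∑' x, w x) :=
    σ.hasSum_iff.2 hw.hasSum
  rw [show (Real.exp (c k l) - 1) * ∑' x, w x = ∑' x, w x - ∑' x, w x - ∑' x, w x +
    Real.exp (c k l) * ∑' x, w x by ring]
  exact ((hw.hasSum.sub (hasSum_shift (e k))).sub (hasSum_shift (e l))).add
    ((hasSum_shift ((e l).trans (e k))).mul_left _)

lemma hasSum_mul_sum_sub_shift {w : X → ℝ} (hw : Summable w)
    (hhw : Summable fun x => h x * w x) (hh : ∀ k x, h (e k x) = h x + 1) (G : Finset κ) :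
    HasSum (fun x => h x * ∑ k ∈ G, (w x - w (e k x))) (#G * ∑' x, w x) := by
  have hasSum_one_shift (k : κ) : HasSum (fun x => h x * (w x - w (e k x))) (∑' x, w x) := by
    have summed_by_parts := hhw.hasSum.sub ((e k).hasSum_iff.2 (hhw.hasSum.sub hw.hasSum))
    simpa only [sub_sub_cancel, Function.comp_apply, hh, add_mul, one_mul, add_sub_cancel_right,
      ← mul_sub] using summed_by_parts
  simpa only [mul_sum, sum_const, nsmul_eq_mul] using hasSum_sum fun k _ => hasSum_one_shift k

lemma summable_mul_of_summable_sq_mul {w : X → ℝ} (hw₀ : ∀ x, 0 ≤ w x) (hw : Summable w)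
    (hhw : Summable fun x => h x ^ 2 * w x) : Summable fun x => h x * w x := by
  refine Summable.of_norm_bounded (hw.add hhw) fun x => ?_
  rw [Real.norm_eq_abs, abs_mul, abs_of_nonneg (hw₀ x)]
  nlinarith [hw₀ x, mul_nonneg (hw₀ x) (sq_nonneg (|h x| - 1)),
    mul_nonneg (hw₀ x) (sq_nonneg (|h x|)), sq_abs (h x)]

theorem card_mul_tsum_gibbsWeight_le {G : Finset κ} {M : ℝ}
    (hm : ∀ x, 0 ≤ m x) (hmi : ∀ k ∈ G, ∀ x, m (e k x) = m x) (hh : ∀ k x, h (e k x) = h x + 1)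
    (hU : ∀ k l x, U x + U (e k (e l x)) ≤ U (e k x) + U (e l x) + c k l)
    (hw : Summable (gibbsWeight m U)) (hhw : Summable fun x => h x ^ 2 * gibbsWeight m U x)
    (hM : 0 < M) (hc : ∀ k ∈ G, ∑ l ∈ G, (Real.exp (c k l) - 1) ≤ M) :
    #G * ∑' x, gibbsWeight m U x ≤ M * ∑' x, h x ^ 2 * gibbsWeight m U x := by
  set w := gibbsWeight m U
  have hw₀ (x : X) : 0 ≤ w x := gibbsWeight_nonneg hm x
  have cross_sum := hasSum_mul_sum_sub_shift hw (summable_mul_of_summable_sq_mul hw₀ hw hhw) hh G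
  -- The expansion of `0 ≤ (h x - M⁻¹ * shiftScore U e G x) ^ 2`, weighted by `w x`.
  have pointwise (x : X) : M⁻¹ * 2 * (h x * ∑ k ∈ G, (w x - w (e k x))) - M⁻¹ ^ 2 *
      ∑ k ∈ G, ∑ l ∈ G, (w x - w (e k x) - w (e l x) + Real.exp (c k l) * w (e k (e l x))) ≤
      h x ^ 2 * w x := by
    have score_sq_le := gibbsWeight_mul_shiftScore_sq_le hm hmi hU x
    rw [← gibbsWeight_mul_shiftScore hmi]
    nlinarith [mul_nonneg (hw₀ x) (sq_nonneg (h x - M⁻¹ * shiftScore U e G x)),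
      mul_le_mul_of_nonneg_left score_sq_le (sq_nonneg M⁻¹)]
  have summed := hasSum_le pointwise ((cross_sum.mul_left (M⁻¹ * 2)).sub
    ((hasSum_sum_shift_curvature hw e c G).mul_left (M⁻¹ ^ 2))) hhw.hasSum
  have curvature_le : ∑ k ∈ G, ∑ l ∈ G, (Real.exp (c k l) - 1) ≤ #G * M := by
    simpa only [sum_const, nsmul_eq_mul] using sum_le_sum hc
  have curvature_mul_le : M⁻¹ ^ 2 * ((∑ k ∈ G, ∑ l ∈ G, (Real.exp (c k l) - 1)) * ∑' x, w x) ≤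
      M⁻¹ * (#G * ∑' x, w x) :=
    calc _ ≤ M⁻¹ ^ 2 * (#G * M * ∑' x, w x) := by
          gcongr
          exact tsum_nonneg hw₀
      _ = M⁻¹ * (#G * ∑' x, w x) := by field_simp
  rw [← inv_mul_le_iff₀ hM]
  linarith

end ChapmanRobbins

section Levels

/-- The increment of the height function `φ` across the bond `p`. -/
def grad (φ : ℤ → ℤ) (p : ℤ × ℤ) : ℤ :=
  φ p.1 - φ p.2

/-- The length of a bond, as a real number. -/
noncomputable def bondLength (p : ℤ × ℤ) : ℝ :=
  |((p.1 - p.2 : ℤ) : ℝ)|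

/-- The indicator function of the interval `[-k, k]`. -/
def plateau (k : ℕ) (i : ℤ) : ℤ :=
  if |i| ≤ k then 1 else 0

/-- The bond `p` crosses level `k` when exactly one of its end points lies in `[-k, k]`. -/
abbrev Crosses (k : ℕ) (p : ℤ × ℤ) : Prop :=
  plateau k p.1 ≠ plateau k p.2

variable {k l : ℕ} {p : ℤ × ℤ}

lemma bondLength_nonneg (p : ℤ × ℤ) : 0 ≤ bondLength p :=
  abs_nonneg _

lemma grad_add (φ ψ : ℤ → ℤ) (p : ℤ × ℤ) : grad (φ + ψ) p = grad φ p + grad ψ p := by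
  simp only [grad, Pi.add_apply]
  ring

lemma grad_plateau_of_not_crosses (h : ¬Crosses k p) : grad (plateau k) p = 0 :=
  sub_eq_zero.2 (not_not.1 h)

lemma Crosses.grad_plateau_eq (hk : Crosses k p) (hl : Crosses l p) :
    grad (plateau k) p = grad (plateau l) p := by
  simp only [Crosses, plateau, grad] at *
  grind

lemma Crosses.grad_plateau_eq_one_or (hk : Crosses k p) :
    grad (plateau k) p = 1 ∨ grad (plateau k) p = -1 := by
  simp only [Crosses, plateau, grad] at *
  grind

lemma Crosses.one_le_bondLength (hk : Crosses k p) : 1 ≤ bondLength p := by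
  have ne : p.1 - p.2 ≠ 0 := fun h => hk (by rw [sub_eq_zero.1 h])
  rw [bondLength]
  exact_mod_cast Int.one_le_abs ne

lemma card_crosses_le_bondLength {N : ℕ} (G : Finset (Fin N)) (p : ℤ × ℤ) :
    (#(G.filter fun l : Fin N => Crosses l p) : ℝ) ≤ bondLength p := by
  have mem_Ico_of_mem : ∀ l ∈ G.filter fun l : Fin N => Crosses l p,
      (l : ℕ) ∈ Ico (min p.1.natAbs p.2.natAbs) (max p.1.natAbs p.2.natAbs) := by
    intro l hl
    have hc : Crosses l p := (mem_filter.1 hl).2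
    simp only [Crosses, plateau, mem_Ico] at *
    grind
  have card_le := card_le_card_of_injOn Fin.val mem_Ico_of_mem Fin.val_injective.injOn
  have card_le_abs : (#(G.filter fun l : Fin N => Crosses l p) : ℤ) ≤ |p.1 - p.2| := by
    rw [Nat.card_Ico] at card_le
    rw [Int.abs_eq_natAbs]
    omega
  rw [bondLength]
  exact_mod_cast card_le_abs

lemma Crosses.abs_sub_edge_add_one_le (hk : Crosses k p) : ∃ b : ℤ, (b = k ∨ b = -k) ∧
    |p.1 - b| + 1 ≤ 2 * |p.1 - p.2| ∧ |p.2 - b| + 1 ≤ 2 * |p.1 - p.2| := by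
  simp only [Crosses, plateau] at hk
  simp only [or_and_right, exists_or, exists_eq_left]
  grind

/-- The decay `(|z| + 1) ^ (-γ / 2)`, whose tensor square dominates the couplings crossing a
given point of the line. -/
noncomputable def halfDecay (γ : ℝ) (z : ℤ) : ℝ :=
  (|(z : ℝ)| + 1) ^ (-(γ / 2))

/-- A product kernel centred at `b` that dominates `bondLength ^ (-γ)` on the bonds passing
over `b`. -/
noncomputable def edgeKernel (γ : ℝ) (b : ℤ) (p : ℤ × ℤ) : ℝ :=
  2 ^ γ * (halfDecay γ (p.1 - b) * halfDecay γ (p.2 - b))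

lemma halfDecay_nonneg (γ : ℝ) (z : ℤ) : 0 ≤ halfDecay γ z := by
  unfold halfDecay
  positivity

variable {γ : ℝ}

lemma summable_halfDecay (hγ : 2 < γ) : Summable (halfDecay γ) := by
  have summable_nat : Summable fun n : ℕ => ((n : ℝ) + 1) ^ (-(γ / 2)) := by
    have exponent_lt : -(γ / 2) < -1 := by linarith
    simpa using (summable_nat_add_iff 1).2 (Real.summable_nat_rpow.2 exponent_lt)
  exact Summable.of_nat_of_neg (by simpa [halfDecay] using summable_nat)
    (by simpa [halfDecay] using summable_nat)

lemma rpow_neg_le_mul_halfDecay (hγ : 0 ≤ γ) {a b r : ℤ} (ha : |a| + 1 ≤ 2 * |r|)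
    (hb : |b| + 1 ≤ 2 * |r|) :
    |(r : ℝ)| ^ (-γ) ≤ 2 ^ γ * (halfDecay γ a * halfDecay γ b) := by
  have r_pos : 0 < |(r : ℝ)| := by
    have : 0 < |r| := by linarith [abs_nonneg a]
    exact_mod_cast this
  have le_halfDecay {z : ℤ} (hz : |z| + 1 ≤ 2 * |r|) :
      (2 * |(r : ℝ)|) ^ (-(γ / 2)) ≤ halfDecay γ z :=
    Real.rpow_le_rpow_of_nonpos (by positivity) (by exact_mod_cast hz) (by linarith)
  calc |(r : ℝ)| ^ (-γ)
      = 2 ^ γ * ((2 * |(r : ℝ)|) ^ (-(γ / 2)) * (2 * |(r : ℝ)|) ^ (-(γ / 2))) := by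
        rw [← Real.rpow_add (by positivity), ← neg_add, add_halves,
          Real.mul_rpow two_pos.le r_pos.le, ← mul_assoc, ← Real.rpow_add two_pos, add_neg_cancel,
          Real.rpow_zero, one_mul]
    _ ≤ 2 ^ γ * (halfDecay γ a * halfDecay γ b) := by
        gcongr
        exacts [halfDecay_nonneg _ _, le_halfDecay ha, le_halfDecay hb]

lemma edgeKernel_nonneg (γ : ℝ) (b : ℤ) (p : ℤ × ℤ) : 0 ≤ edgeKernel γ b p :=
  mul_nonneg (by positivity) (mul_nonneg (halfDecay_nonneg _ _) (halfDecay_nonneg _ _))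

lemma hasSum_edgeKernel (hγ : 2 < γ) (b : ℤ) :
    HasSum (edgeKernel γ b) (2 ^ γ * ((∑' z, halfDecay γ z) * ∑' z, halfDecay γ z)) := by
  have shifted : HasSum (fun z => halfDecay γ (z - b)) (∑' z, halfDecay γ z) :=
    (Equiv.subRight b).hasSum_iff.2 (summable_halfDecay hγ).hasSum
  have shifted_nonneg : 0 ≤ fun z => halfDecay γ (z - b) := fun z => halfDecay_nonneg γ (z - b)
  have summable_prod :=
    shifted.summable.mul_of_nonneg shifted.summable shifted_nonneg shifted_nonneg
  exact (shifted.mul shifted summable_prod).mul_left (2 ^ γ)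

lemma Crosses.bondLength_rpow_neg_le (hγ : 0 ≤ γ) (hk : Crosses k p) :
    bondLength p ^ (-γ) ≤ edgeKernel γ k p + edgeKernel γ (-k) p := by
  obtain ⟨b, hb, h₁, h₂⟩ := hk.abs_sub_edge_add_one_le
  have le_edgeKernel : bondLength p ^ (-γ) ≤ edgeKernel γ b p :=
    rpow_neg_le_mul_halfDecay hγ h₁ h₂
  rcases hb with rfl | rfl
  · linarith [edgeKernel_nonneg γ (-k) p]
  · linarith [edgeKernel_nonneg γ k p]

lemma exists_forall_sum_crosses_le (hγ : 2 < γ) : ∃ C : ℝ, 0 < C ∧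
    ∀ (k : ℕ) (B : Finset (ℤ × ℤ)), ∑ p ∈ B with Crosses k p, bondLength p ^ (-γ) ≤ C := by
  obtain ⟨D, hD⟩ : ∃ D, ∀ b, HasSum (edgeKernel γ b) D := ⟨_, hasSum_edgeKernel hγ⟩
  have D_nonneg : 0 ≤ D := (hD 0).nonneg (edgeKernel_nonneg γ 0)
  refine ⟨D + D + 1, by positivity, fun k B => ?_⟩
  calc ∑ p ∈ B with Crosses k p, bondLength p ^ (-γ)
      ≤ ∑ p ∈ B with Crosses k p, (edgeKernel γ k p + edgeKernel γ (-k) p) :=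
        sum_le_sum fun p hp => (mem_filter.1 hp).2.bondLength_rpow_neg_le (by linarith)
    _ ≤ D + D := sum_le_hasSum _
        (fun p _ => add_nonneg (edgeKernel_nonneg _ _ _) (edgeKernel_nonneg _ _ _))
        ((hD k).add (hD (-k)))
    _ ≤ D + D + 1 := by linarith

variable {N : ℕ}

/-- Raising a configuration by one on `[-k, k]`. -/
def raise (k : Fin (N + 1)) : Equiv.Perm (ChainConfig N) :=
  (Equiv.addRight (plateau k)).subtypeEquiv fun φ => by
    refine forall₂_congr fun i hi => ?_
    have : ¬|i| ≤ k := by omega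
    simp [plateau, this]

lemma grad_raise (k : Fin (N + 1)) (φ : ChainConfig N) (p : ℤ × ℤ) :
    grad (raise k φ).val p = grad φ.val p + grad (plateau k) p :=
  grad_add _ _ _

/-- The height at the origin, as a real random variable. -/
def originHeight (φ : ChainConfig N) : ℝ :=
  ((φ.val 0 : ℤ) : ℝ)

lemma originHeight_raise (k : Fin (N + 1)) (φ : ChainConfig N) :
    originHeight (raise k φ) = originHeight φ + 1 := by
  have raise_val : (raise k φ).val 0 = φ.val 0 + plateau k 0 := rfl
  simp [originHeight, raise_val, plateau]

end Levels

section FiniteBonds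

lemma sum_powerset_card_filter_mul_prod {ι κ : Type*} [Fintype κ]
    (C : κ → ι → Prop) [∀ k, DecidablePred (C k)] (B : Finset ι) (g : ι → ℝ) :
    ∑ S ∈ B.powerset, (#{k | ∀ p ∈ S, ¬C k p} : ℝ) * ∏ p ∈ S, g p =
      ∑ k, ∏ p ∈ B with ¬C k p, (1 + g p) := by
  classical
  have powerset_filter (k : κ) :
      {S ∈ B.powerset | ∀ p ∈ S, ¬C k p} = {p ∈ B | ¬C k p}.powerset := by
    ext S
    simp only [mem_filter, mem_powerset, subset_iff]
    exact ⟨fun h p hp => ⟨h.1 hp, h.2 p hp⟩, fun h => ⟨fun p hp => (h hp).1, fun p hp => (h hp).2⟩⟩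
  simp only [prod_one_add, ← powerset_filter, card_filter, Nat.cast_sum, Nat.cast_ite, Nat.cast_one,
    Nat.cast_zero, sum_mul, ite_mul, one_mul, zero_mul]
  rw [sum_comm]
  simp only [sum_filter]

variable {N : ℕ}

/-- The energy of a configuration with pair potentials `V p` on a finite set of bonds. -/
def bondEnergy (V : ℤ × ℤ → ℤ → ℝ) (B : Finset (ℤ × ℤ)) (φ : ChainConfig N) : ℝ :=
  ∑ p ∈ B, V p (grad φ.val p)

/-- The weight carried by the set `S` of activated bonds when each factor
`exp (R p) = 1 + (exp (R p) - 1)` of a Boltzmann weight is expanded. -/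
noncomputable def activationWeight (R : ℤ × ℤ → ℤ → ℝ) (S : Finset (ℤ × ℤ))
    (φ : ChainConfig N) : ℝ :=
  ∏ p ∈ S, (Real.exp (R p (grad φ.val p)) - 1)

/-- The levels crossed by none of the activated bonds: raising a configuration along such a
level does not change the activation weight. -/
def freeLevels (N : ℕ) (S : Finset (ℤ × ℤ)) : Finset (Fin (N + 1)) :=
  {k | ∀ p ∈ S, ¬Crosses k p}

/-- The total convexity defect `c` of the bonds crossing both levels `k` and `l`. -/
def sharedDefect (c : ℤ × ℤ → ℝ) (B : Finset (ℤ × ℤ)) (k l : Fin (N + 1)) : ℝ :=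
  ∑ p ∈ B with Crosses k p ∧ Crosses l p, c p

variable {U R : ℤ × ℤ → ℤ → ℝ} {c : ℤ × ℤ → ℝ} {B S : Finset (ℤ × ℤ)}

lemma activationWeight_nonneg (hR : ∀ p x, 0 ≤ R p x) (S : Finset (ℤ × ℤ)) (φ : ChainConfig N) :
    0 ≤ activationWeight R S φ :=
  prod_nonneg fun p _ => sub_nonneg.2 (Real.one_le_exp (hR p _))

lemma activationWeight_raise {k : Fin (N + 1)} (hk : k ∈ freeLevels N S) (φ : ChainConfig N) :
    activationWeight R S (raise k φ) = activationWeight R S φ := by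
  refine prod_congr rfl fun p hp => ?_
  rw [grad_raise, grad_plateau_of_not_crosses ((mem_filter.1 hk).2 p hp), add_zero]

lemma sum_powerset_gibbsWeight_activationWeight (U R : ℤ × ℤ → ℤ → ℝ) (B : Finset (ℤ × ℤ))
    (φ : ChainConfig N) :
    ∑ S ∈ B.powerset, gibbsWeight (activationWeight R S) (bondEnergy U B) φ =
      Real.exp (-bondEnergy (U - R) B φ) := by
  simp only [gibbsWeight, activationWeight, ← sum_mul, ← prod_one_add, add_sub_cancel]
  rw [← Real.exp_sum, ← Real.exp_add, bondEnergy, bondEnergy]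
  simp only [Pi.sub_apply, sum_sub_distrib]
  ring_nf

lemma gibbsWeight_activationWeight_le (hR : ∀ p x, 0 ≤ R p x) (hS : S ∈ B.powerset)
    (φ : ChainConfig N) :
    gibbsWeight (activationWeight R S) (bondEnergy U B) φ ≤
      Real.exp (-bondEnergy (U - R) B φ) := by
  rw [← sum_powerset_gibbsWeight_activationWeight]
  exact single_le_sum (f := fun S => gibbsWeight (activationWeight R S) (bondEnergy U B) φ)
    (fun S _ => gibbsWeight_nonneg (activationWeight_nonneg hR S) φ) hS

lemma exp_neg_mul_le_sum_card_freeLevels {ε : ℝ} (φ : ChainConfig N)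
    (hε : ∀ k : Fin (N + 1), ∑ p ∈ B with Crosses k p, R p (grad φ.val p) ≤ ε) :
    (N + 1) * Real.exp (-ε) * Real.exp (-bondEnergy (U - R) B φ) ≤
      ∑ S ∈ B.powerset,
        #(freeLevels N S) * gibbsWeight (activationWeight R S) (bondEnergy U B) φ := by
  have level_le (k : Fin (N + 1)) : Real.exp (-ε) * Real.exp (-bondEnergy (U - R) B φ) ≤
      (∏ p ∈ B with ¬Crosses k p, Real.exp (R p (grad φ.val p))) *
        Real.exp (-bondEnergy U B φ) := by
    rw [← Real.exp_sum, ← Real.exp_add, ← Real.exp_add, Real.exp_le_exp]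
    have split_sum := sum_filter_add_sum_filter_not B (fun p => Crosses k p)
      fun p => R p (grad φ.val p)
    have energy_sub : bondEnergy (U - R) B φ =
        bondEnergy U B φ - ∑ p ∈ B, R p (grad φ.val p) := by
      simp only [bondEnergy, Pi.sub_apply, sum_sub_distrib]
    linarith [hε k]
  calc (N + 1) * Real.exp (-ε) * Real.exp (-bondEnergy (U - R) B φ)
      = ∑ _k : Fin (N + 1), Real.exp (-ε) * Real.exp (-bondEnergy (U - R) B φ) := by
        rw [sum_const, card_univ, Fintype.card_fin, nsmul_eq_mul]
        push_cast
        ring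
    _ ≤ ∑ k : Fin (N + 1), (∏ p ∈ B with ¬Crosses k p, Real.exp (R p (grad φ.val p))) *
          Real.exp (-bondEnergy U B φ) := sum_le_sum fun k _ => level_le k
    _ = _ := by
        have expansion := sum_powerset_card_filter_mul_prod (fun k : Fin (N + 1) => Crosses k) B
          fun p => Real.exp (R p (grad φ.val p)) - 1
        simp only [add_sub_cancel] at expansion
        simp only [gibbsWeight, ← mul_assoc, ← sum_mul, ← expansion]
        rfl

lemma bond_second_difference_le {V : ℤ → ℝ} {a : ℝ} {k l : ℕ} {p : ℤ × ℤ}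
    (hV : Crosses k p → ∀ y, V (y + 1) + V (y - 1) ≤ 2 * V y + a) (x : ℤ) :
    V x + V (x + grad (plateau l) p + grad (plateau k) p) ≤
      V (x + grad (plateau k) p) + V (x + grad (plateau l) p) +
        if Crosses k p ∧ Crosses l p then a else 0 := by
  by_cases hk : Crosses k p
  · by_cases hl : Crosses l p
    · rw [if_pos ⟨hk, hl⟩, hl.grad_plateau_eq hk]
      rcases hk.grad_plateau_eq_one_or with h | h <;> rw [h]
      · have := hV hk (x + 1)
        rw [add_sub_cancel_right] at this
        linarith
      · have := hV hk (x + -1)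
        rw [neg_add_cancel_right, sub_eq_add_neg] at this
        linarith
    · rw [grad_plateau_of_not_crosses hl, if_neg fun h => hl h.2, add_zero, add_zero, add_comm]
  · rw [grad_plateau_of_not_crosses hk, if_neg fun h => hk h.1, add_zero, add_zero, add_zero]

lemma bondEnergy_raise_raise_le
    (hU : ∀ k p, Crosses k p → ∀ y, U p (y + 1) + U p (y - 1) ≤ 2 * U p y + c p)
    (B : Finset (ℤ × ℤ)) (k l : Fin (N + 1)) (φ : ChainConfig N) :
    bondEnergy U B φ + bondEnergy U B (raise k (raise l φ)) ≤
      bondEnergy U B (raise k φ) + bondEnergy U B (raise l φ) + sharedDefect c B k l := by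
  simp only [bondEnergy, sharedDefect, sum_filter, ← sum_add_distrib, grad_raise]
  exact sum_le_sum fun p _ => bond_second_difference_le (hU k p) _

lemma sharedDefect_nonneg (hc : ∀ p, 0 ≤ c p) (B : Finset (ℤ × ℤ)) (k l : Fin (N + 1)) :
    0 ≤ sharedDefect c B k l :=
  sum_nonneg fun p _ => hc p

lemma sum_sharedDefect_le (hc : ∀ p, 0 ≤ c p) (B : Finset (ℤ × ℤ)) (G : Finset (Fin (N + 1)))
    (k : Fin (N + 1)) :
    ∑ l ∈ G, sharedDefect c B k l ≤ ∑ p ∈ B with Crosses k p, bondLength p * c p := by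
  calc ∑ l ∈ G, sharedDefect c B k l
      = ∑ p ∈ B with Crosses k p, #(G.filter fun l : Fin (N + 1) => Crosses l p) * c p := by
        simp only [sharedDefect, ← filter_filter]
        simp only [sum_filter (p := fun p => Crosses _ p) (s := filter _ _)]
        rw [sum_comm]
        exact sum_congr rfl fun p _ => by rw [← sum_filter, sum_const, nsmul_eq_mul]
    _ ≤ _ := sum_le_sum fun p _ =>
        mul_le_mul_of_nonneg_right (card_crosses_le_bondLength G p) (hc p)

lemma exp_sub_one_le_mul_exp (x : ℝ) : Real.exp x - 1 ≤ x * Real.exp x := by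
  have := mul_le_mul_of_nonneg_right (Real.add_one_le_exp (-x)) (Real.exp_pos x).le
  rw [← Real.exp_add, neg_add_cancel, Real.exp_zero] at this
  linarith

lemma sum_exp_sharedDefect_sub_one_le {A : ℝ} (hc : ∀ p, 0 ≤ c p) {k : Fin (N + 1)}
    (hA : ∑ p ∈ B with Crosses k p, bondLength p * c p ≤ A) (G : Finset (Fin (N + 1))) :
    ∑ l ∈ G, (Real.exp (sharedDefect c B k l) - 1) ≤ A * Real.exp A := by
  have sum_le_A : ∑ l ∈ G, sharedDefect c B k l ≤ A := (sum_sharedDefect_le hc B G k).trans hA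
  have nonneg := sharedDefect_nonneg hc B k
  have le_A {l : Fin (N + 1)} (hl : l ∈ G) : sharedDefect c B k l ≤ A :=
    (single_le_sum (fun l _ => nonneg l) hl).trans sum_le_A
  calc ∑ l ∈ G, (Real.exp (sharedDefect c B k l) - 1)
      ≤ ∑ l ∈ G, sharedDefect c B k l * Real.exp A := by
        refine sum_le_sum fun l hl => (exp_sub_one_le_mul_exp _).trans ?_
        exact mul_le_mul_of_nonneg_left (Real.exp_le_exp.2 (le_A hl)) (nonneg l)
    _ ≤ A * Real.exp A := by
        rw [← sum_mul]
        exact mul_le_mul_of_nonneg_right sum_le_A (Real.exp_pos A).le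

theorem exp_neg_mul_tsum_le_mul_tsum_originHeight_sq {A ε : ℝ} (hA₀ : 0 < A)
    (hR : ∀ p x, 0 ≤ R p x) (hc : ∀ p, 0 ≤ c p)
    (hU : ∀ k p, Crosses k p → ∀ y, U p (y + 1) + U p (y - 1) ≤ 2 * U p y + c p)
    (hA : ∀ k : Fin (N + 1), ∑ p ∈ B with Crosses k p, bondLength p * c p ≤ A)
    (hε : ∀ (k : Fin (N + 1)) (φ : ChainConfig N),
      ∑ p ∈ B with Crosses k p, R p (grad φ.val p) ≤ ε)
    (hw : Summable fun φ : ChainConfig N => Real.exp (-bondEnergy (U - R) B φ))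
    (hhw : Summable fun φ : ChainConfig N =>
      originHeight φ ^ 2 * Real.exp (-bondEnergy (U - R) B φ)) :
    (N + 1) * Real.exp (-ε) * ∑' φ : ChainConfig N, Real.exp (-bondEnergy (U - R) B φ) ≤
      A * Real.exp A *
        ∑' φ : ChainConfig N, originHeight φ ^ 2 * Real.exp (-bondEnergy (U - R) B φ) := by
  set w : Finset (ℤ × ℤ) → ChainConfig N → ℝ :=
    fun S => gibbsWeight (activationWeight R S) (bondEnergy U B)
  have w_nonneg (S φ) : 0 ≤ w S φ := gibbsWeight_nonneg (activationWeight_nonneg hR S) φ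
  have w_le {S} (hS : S ∈ B.powerset) (φ) : w S φ ≤ Real.exp (-bondEnergy (U - R) B φ) :=
    gibbsWeight_activationWeight_le hR hS φ
  have summable_w {S} (hS : S ∈ B.powerset) : Summable (w S) :=
    hw.of_nonneg_of_le (w_nonneg S) (w_le hS)
  have summable_sq_w {S} (hS : S ∈ B.powerset) : Summable fun φ => originHeight φ ^ 2 * w S φ :=
    hhw.of_nonneg_of_le (fun φ => mul_nonneg (sq_nonneg _) (w_nonneg S φ))
      fun φ => mul_le_mul_of_nonneg_left (w_le hS φ) (sq_nonneg _)
  have activated_bound {S} (hS : S ∈ B.powerset) : #(freeLevels N S) * ∑' φ, w S φ ≤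
      A * Real.exp A * ∑' φ, originHeight φ ^ 2 * w S φ :=
    card_mul_tsum_gibbsWeight_le (activationWeight_nonneg hR S)
      (fun k hk φ => activationWeight_raise hk φ) originHeight_raise
      (bondEnergy_raise_raise_le hU B) (summable_w hS) (summable_sq_w hS)
      (by positivity) fun k _ => sum_exp_sharedDefect_sub_one_le hc (hA k) _
  calc _ = ∑' φ : ChainConfig N,
          (N + 1) * Real.exp (-ε) * Real.exp (-bondEnergy (U - R) B φ) := tsum_mul_left.symm
    _ ≤ ∑' φ, ∑ S ∈ B.powerset, #(freeLevels N S) * w S φ :=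
        (hw.mul_left _).tsum_le_tsum
          (fun φ => exp_neg_mul_le_sum_card_freeLevels φ fun k => hε k φ)
          (summable_sum fun S hS => (summable_w hS).mul_left _)
    _ = ∑ S ∈ B.powerset, #(freeLevels N S) * ∑' φ, w S φ := by
        rw [Summable.tsum_finsetSum fun S hS => (summable_w hS).mul_left _]
        simp only [tsum_mul_left]
    _ ≤ ∑ S ∈ B.powerset, A * Real.exp A * ∑' φ, originHeight φ ^ 2 * w S φ :=
        sum_le_sum fun S hS => activated_bound hS
    _ = _ := by
        rw [← mul_sum, ← Summable.tsum_finsetSum fun S hS => summable_sq_w hS]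
        simp only [← mul_sum, w, sum_powerset_gibbsWeight_activationWeight]

end FiniteBonds

section SmoothedPotential

lemma rpow_add_le_rpow_add_mul {s t δ : ℝ} (hs₀ : 0 ≤ s) (hs₁ : s ≤ 1) (ht : 0 < t)
    (htδ : 0 ≤ t + δ) : (t + δ) ^ s ≤ t ^ s + s * t ^ (s - 1) * δ := by
  have factor : t + δ = t * (1 + δ / t) := by field_simp
  have ratio_ge : -1 ≤ δ / t := by
    rw [le_div_iff₀ ht]
    linarith
  calc (t + δ) ^ s = t ^ s * (1 + δ / t) ^ s := by
        rw [factor, Real.mul_rpow ht.le (by linarith)]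
    _ ≤ t ^ s * (1 + s * (δ / t)) := by
        gcongr
        exact rpow_one_add_le_one_add_mul_self ratio_ge hs₀ hs₁
    _ = t ^ s + s * t ^ (s - 1) * δ := by
        rw [Real.rpow_sub_one ht.ne']
        ring

lemma rpow_add_sq_second_difference_le {s r : ℝ} (hs₀ : 0 ≤ s) (hs₁ : s ≤ 1) (hr : 0 < r)
    (y : ℝ) :
    (r + (y + 1) ^ 2) ^ s + (r + (y - 1) ^ 2) ^ s ≤ 2 * (r + y ^ 2) ^ s + 2 * r ^ (s - 1) := by
  have base_pos : 0 < r + y ^ 2 := by positivity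
  have up := rpow_add_le_rpow_add_mul (δ := 2 * y + 1) hs₀ hs₁ base_pos
    (by linarith [sq_nonneg (y + 1)])
  have down := rpow_add_le_rpow_add_mul (δ := -2 * y + 1) hs₀ hs₁ base_pos
    (by linarith [sq_nonneg (y - 1)])
  have slope_le : s * (r + y ^ 2) ^ (s - 1) ≤ r ^ (s - 1) :=
    (mul_le_of_le_one_left (by positivity) hs₁).trans
      (Real.rpow_le_rpow_of_nonpos hr (by nlinarith) (by linarith))
  rw [show r + (y + 1) ^ 2 = r + y ^ 2 + (2 * y + 1) by ring,
    show r + (y - 1) ^ 2 = r + y ^ 2 + (-2 * y + 1) by ring]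
  linarith

lemma abs_rpow_eq_sq_rpow_half (x q : ℝ) : |x| ^ q = (x ^ 2) ^ (q / 2) := by
  rw [← sq_abs, ← Real.rpow_natCast_mul (abs_nonneg x)]
  congr 1
  push_cast
  ring

/-- The pair potential `β |x| ^ q / |i - j| ^ α` of the `q`-SOS chain on the bond `p = (i, j)`. -/
noncomputable def powerPotential (β α q : ℝ) (p : ℤ × ℤ) (x : ℤ) : ℝ :=
  β * bondLength p ^ (-α) * |(x : ℝ)| ^ q

/-- The power potential smoothed at the scale `|i - j| ^ (1 / 2)`, on which a chain of
independent increments fluctuates over a distance `|i - j|`. -/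
noncomputable def smoothPotential (β α q : ℝ) (p : ℤ × ℤ) (x : ℤ) : ℝ :=
  β * bondLength p ^ (-α) * (bondLength p + (x : ℝ) ^ 2) ^ (q / 2)

/-- The amount by which the smoothed potential exceeds the power potential. -/
noncomputable def smoothingError (β α q : ℝ) : ℤ × ℤ → ℤ → ℝ :=
  smoothPotential β α q - powerPotential β α q

variable {β α q : ℝ} {k : ℕ} {p : ℤ × ℤ}

lemma powerPotential_nonneg (hβ : 0 ≤ β) (p : ℤ × ℤ) (x : ℤ) : 0 ≤ powerPotential β α q p x := by
  have := bondLength_nonneg p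
  unfold powerPotential
  positivity

lemma smoothingError_nonneg (hβ : 0 ≤ β) (hq : 0 ≤ q) (p : ℤ × ℤ) (x : ℤ) :
    0 ≤ smoothingError β α q p x := by
  have length_nonneg := bondLength_nonneg p
  refine sub_nonneg.2 (mul_le_mul_of_nonneg_left ?_ (by positivity))
  rw [abs_rpow_eq_sq_rpow_half]
  exact Real.rpow_le_rpow (sq_nonneg _) (by linarith) (by linarith)

lemma Crosses.smoothingError_le (hk : Crosses k p) (hβ : 0 ≤ β) (hq₀ : 0 ≤ q) (hq₂ : q ≤ 2)
    (x : ℤ) : smoothingError β α q p x ≤ β * bondLength p ^ (-(α - q / 2)) := by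
  have length_pos : 0 < bondLength p := one_pos.trans_le hk.one_le_bondLength
  have subadditive : (bondLength p + (x : ℝ) ^ 2) ^ (q / 2) ≤
      bondLength p ^ (q / 2) + |(x : ℝ)| ^ q := by
    rw [abs_rpow_eq_sq_rpow_half]
    exact Real.rpow_add_le_add_rpow length_pos.le (sq_nonneg _) (by linarith) (by linarith)
  calc smoothingError β α q p x
      = β * bondLength p ^ (-α) *
          ((bondLength p + (x : ℝ) ^ 2) ^ (q / 2) - |(x : ℝ)| ^ q) := (mul_sub _ _ _).symm
    _ ≤ β * bondLength p ^ (-α) * bondLength p ^ (q / 2) := by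
        gcongr
        linarith
    _ = β * bondLength p ^ (-(α - q / 2)) := by
        rw [mul_assoc, ← Real.rpow_add length_pos]
        ring_nf

lemma Crosses.smoothPotential_second_difference_le (hk : Crosses k p) (hβ : 0 ≤ β) (hq₀ : 0 ≤ q)
    (hq₂ : q ≤ 2) (y : ℤ) :
    smoothPotential β α q p (y + 1) + smoothPotential β α q p (y - 1) ≤
      2 * smoothPotential β α q p y + 2 * β * bondLength p ^ (-(α - q / 2) - 1) := by
  have length_pos : 0 < bondLength p := one_pos.trans_le hk.one_le_bondLength
  have second_difference := mul_le_mul_of_nonneg_left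
    (rpow_add_sq_second_difference_le (by linarith) (by linarith) length_pos y (s := q / 2))
    (show 0 ≤ β * bondLength p ^ (-α) by positivity)
  have exponents : bondLength p ^ (-α) * bondLength p ^ (q / 2 - 1) =
      bondLength p ^ (-(α - q / 2) - 1) := by
    rw [← Real.rpow_add length_pos]
    ring_nf
  rw [← exponents]
  simp only [smoothPotential]
  push_cast
  linarith

lemma Crosses.bondLength_mul_rpow_sub_one (hk : Crosses k p) (a : ℝ) :
    bondLength p * bondLength p ^ (a - 1) = bondLength p ^ a := by
  have length_pos : 0 < bondLength p := one_pos.trans_le hk.one_le_bondLength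
  rw [Real.rpow_sub_one length_pos.ne', mul_div_cancel₀ _ length_pos.ne']

end SmoothedPotential

section Summability

lemma summable_pi_prod {ι Z : Type*} [Fintype ι] {f : Z → ℝ} (hf₀ : ∀ z, 0 ≤ f z)
    (hf : Summable f) : Summable fun x : ι → Z => ∏ i, f (x i) := by
  classical
  refine summable_of_sum_le (c := ∏ _i : ι, ∑' z, f z)
    (fun x => prod_nonneg fun i _ => hf₀ (x i)) fun s => ?_
  have subset_pi : s ⊆ Fintype.piFinset fun i => s.image fun x => x i := fun x hx =>
    Fintype.mem_piFinset.2 fun i => mem_image_of_mem _ hx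
  calc ∑ x ∈ s, ∏ i, f (x i)
      ≤ ∑ x ∈ Fintype.piFinset fun i => s.image fun x => x i, ∏ i, f (x i) :=
        sum_le_sum_of_subset_of_nonneg subset_pi fun x _ _ => prod_nonneg fun i _ => hf₀ (x i)
    _ = ∏ i, ∑ z ∈ s.image fun x => x i, f z := (prod_univ_sum _ fun _ => f).symm
    _ ≤ ∏ _i : ι, ∑' z, f z := prod_le_prod (fun i _ => sum_nonneg fun z _ => hf₀ z)
        fun i _ => hf.sum_le_tsum _ fun z _ => hf₀ z

lemma summable_one_add_sq_mul_exp_neg_rpow {τ q : ℝ} (hτ : 0 < τ) (hq : 0 < q) :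
    Summable fun x : ℤ => (1 + (x : ℝ) ^ 2) * Real.exp (-(τ * |(x : ℝ)| ^ q)) := by
  suffices summable_nat :
      Summable fun n : ℕ => (1 + (n : ℝ) ^ 2) * Real.exp (-(τ * (n : ℝ) ^ q)) from
    Summable.of_nat_of_neg (by simpa using summable_nat) (by simpa using summable_nat)
  have exp_isBigO : (fun n : ℕ => Real.exp (-(τ * (n : ℝ) ^ q))) =O[atTop]
      fun n : ℕ => (n : ℝ) ^ (-4 : ℝ) := by
    refine (((isLittleO_exp_neg_mul_rpow_atTop hτ (-4 / q)).comp_tendsto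
      (tendsto_rpow_atTop hq)).comp_tendsto tendsto_natCast_atTop_atTop).isBigO.congr
        (fun n => ?_) fun n => ?_
    · simp only [Function.comp_apply, neg_mul]
    · simp only [Function.comp_apply]
      rw [← Real.rpow_mul n.cast_nonneg, mul_div_cancel₀ _ hq.ne']
  have poly_isBigO : (fun n : ℕ => 1 + (n : ℝ) ^ 2) =O[atTop] fun n : ℕ => (n : ℝ) ^ (2 : ℝ) := by
    refine Asymptotics.IsBigO.of_bound 2 ((eventually_ge_atTop 1).mono fun n hn => ?_)
    have one_le : (1 : ℝ) ≤ n := by exact_mod_cast hn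
    rw [Real.rpow_two, Real.norm_of_nonneg (by positivity), Real.norm_of_nonneg (by positivity)]
    nlinarith
  refine summable_of_isBigO_nat (Real.summable_nat_rpow.2 (by norm_num : (-2 : ℝ) < -1))
    ((poly_isBigO.mul exp_isBigO).trans (Asymptotics.IsBigO.of_bound 1 ?_))
  filter_upwards [eventually_gt_atTop 0] with n hn
  rw [← Real.rpow_add (by exact_mod_cast hn), one_mul]
  norm_num

lemma abs_sub_rpow_le {q : ℝ} (hq : 0 ≤ q) (a b : ℝ) :
    |a - b| ^ q ≤ 2 ^ q * (|a| ^ q + |b| ^ q) :=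
  calc |a - b| ^ q ≤ (2 * max |a| |b|) ^ q := by
        gcongr
        linarith [abs_sub a b, le_max_left |a| |b|, le_max_right |a| |b|]
    _ = 2 ^ q * max (|a| ^ q) (|b| ^ q) := by
        rw [Real.mul_rpow two_pos.le (by positivity),
          Real.rpow_max (abs_nonneg a) (abs_nonneg b) hq]
    _ ≤ 2 ^ q * (|a| ^ q + |b| ^ q) := by
        gcongr
        exact max_le_add_of_nonneg (by positivity) (by positivity)

lemma summable_mul_comp_sub {G : Type*} [AddGroup G] {f K : G → ℝ} (hf₀ : ∀ i, 0 ≤ f i)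
    (hK₀ : ∀ z, 0 ≤ K z) (hf : Summable f) (hK : Summable K) :
    Summable fun p : G × G => f p.1 * K (p.1 - p.2) :=
  ((Equiv.refl G).prodShear Equiv.subLeft).summable_iff.2 (hf.mul_of_nonneg hK hf₀ hK₀)

variable {N : ℕ} {β α q : ℝ}

lemma ChainConfig.apply_eq_zero (φ : ChainConfig N) {x : ℤ} (hx : x ∉ Icc (-(N : ℤ)) N) :
    φ.val x = 0 :=
  φ.property x (by rwa [mem_Icc, ← abs_le, not_le] at hx)

lemma ChainConfig.restrict_injective : Function.Injective
    fun (φ : ChainConfig N) (x : Icc (-(N : ℤ)) N) => φ.val x := by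
  intro φ ψ h
  refine Subtype.ext (funext fun x => ?_)
  by_cases hx : x ∈ Icc (-(N : ℤ)) N
  · exact congrFun h ⟨x, hx⟩
  · rw [φ.apply_eq_zero hx, ψ.apply_eq_zero hx]

lemma summable_one_add_originHeight_sq_mul_exp_neg {τ : ℝ} (hτ : 0 < τ) (hq : 0 < q) :
    Summable fun φ : ChainConfig N => (1 + originHeight φ ^ 2) *
      Real.exp (-(τ * ∑ x ∈ Icc (-(N : ℤ)) N, |(φ.val x : ℝ)| ^ q)) := by
  have summable_prod := (summable_pi_prod (ι := Icc (-(N : ℤ)) N) (fun x => by positivity)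
    (summable_one_add_sq_mul_exp_neg_rpow hτ hq)).comp_injective ChainConfig.restrict_injective
  refine summable_prod.of_nonneg_of_le (fun φ => by positivity) fun φ => ?_
  have origin_le : 1 + originHeight φ ^ 2 ≤ ∏ x ∈ Icc (-(N : ℤ)) N, (1 + (φ.val x : ℝ) ^ 2) := by
    have zero_mem : (0 : ℤ) ∈ Icc (-(N : ℤ)) N := by simp
    have := prod_le_prod_of_subset_of_one_le (singleton_subset_iff.2 zero_mem)
      (f := fun x => 1 + (φ.val x : ℝ) ^ 2) (fun x _ => by positivity)
      fun x _ _ => by linarith [sq_nonneg (φ.val x : ℝ)]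
    rwa [prod_singleton] at this
  simp only [Function.comp_apply]
  rw [prod_coe_sort (Icc (-(N : ℤ)) N)
      fun x => (1 + (φ.val x : ℝ) ^ 2) * Real.exp (-(τ * |(φ.val x : ℝ)| ^ q)),
    prod_mul_distrib, ← Real.exp_sum, sum_neg_distrib, ← mul_sum]
  gcongr

lemma bondLength_swap (p : ℤ × ℤ) : bondLength p.swap = bondLength p := by
  simp only [bondLength, Prod.fst_swap, Prod.snd_swap, Int.cast_sub, abs_sub_comm]

lemma ChainConfig.summable_abs_rpow (hq : q ≠ 0) (φ : ChainConfig N) :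
    Summable fun i => |(φ.val i : ℝ)| ^ q :=
  summable_of_ne_finset_zero (s := Icc (-(N : ℤ)) N) fun i hi => by
    rw [φ.apply_eq_zero hi, Int.cast_zero, abs_zero, Real.zero_rpow hq]

lemma summable_mul_bondLength_rpow (hα : 1 < α) {f : ℤ → ℝ} (hf₀ : ∀ i, 0 ≤ f i)
    (hf : Summable f) : Summable fun p => f p.1 * bondLength p ^ (-α) := by
  have kernel_nonneg (z : ℤ) : 0 ≤ |(z : ℝ)| ^ (-α) := Real.rpow_nonneg (abs_nonneg _) _
  have summable_kernel : Summable fun z : ℤ => |(z : ℝ)| ^ (-α) := Real.summable_abs_int_rpow hα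
  have := summable_mul_comp_sub hf₀ kernel_nonneg hf summable_kernel
  simpa only [bondLength] using this

lemma summable_powerPotential (hq : 0 < q) (hα : 1 < α) (φ : ChainConfig N) :
    Summable fun p => powerPotential β α q p (grad φ.val p) := by
  have summable_left := summable_mul_bondLength_rpow hα
    (fun i => Real.rpow_nonneg (abs_nonneg (φ.val i : ℝ)) q) (φ.summable_abs_rpow hq.ne')
  have summable_right : Summable fun p : ℤ × ℤ => |(φ.val p.2 : ℝ)| ^ q * bondLength p ^ (-α) := by
    simpa only [Function.comp_def, Equiv.prodComm_apply, bondLength_swap, Prod.fst_swap] using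
      (Equiv.prodComm ℤ ℤ).summable_iff.2 summable_left
  have summable_unscaled : Summable fun p => bondLength p ^ (-α) * |(grad φ.val p : ℝ)| ^ q := by
    refine ((summable_left.add summable_right).mul_left (2 ^ q)).of_nonneg_of_le
      (fun p => mul_nonneg (Real.rpow_nonneg (bondLength_nonneg p) _)
        (Real.rpow_nonneg (abs_nonneg _) _)) fun p => ?_
    have grad_le := abs_sub_rpow_le hq.le (φ.val p.1 : ℝ) (φ.val p.2)
    rw [grad, Int.cast_sub, mul_comm, ← add_mul, ← mul_assoc]
    exact mul_le_mul_of_nonneg_right grad_le (Real.rpow_nonneg (bondLength_nonneg p) _)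
  simpa only [powerPotential, mul_assoc] using summable_unscaled.mul_left β

lemma chainEnergy_eq_tsum_powerPotential (hq : q ≠ 0) (β α : ℝ) (φ : ℤ → ℤ) :
    chainEnergy β α q φ = ∑' p, powerPotential β α q p (grad φ p) := by
  rw [chainEnergy, ← tsum_mul_left]
  refine tsum_congr fun p => ?_
  split_ifs with h
  · simp [powerPotential, grad, h, Real.zero_rpow hq]
  · rw [powerPotential, Real.rpow_neg (bondLength_nonneg p), grad, bondLength]
    ring

/-- The bonds joining the sites of the chain to the pinned site `N + 1`: they alone make the
partition function finite. -/
noncomputable def boundaryBonds (N : ℕ) : Finset (ℤ × ℤ) :=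
  (Icc (-(N : ℤ)) N).image fun x => (x, (N : ℤ) + 1)

lemma mul_abs_rpow_le_powerPotential (hβ : 0 ≤ β) (hα : 0 ≤ α) (φ : ChainConfig N) {x : ℤ}
    (hx : x ∈ Icc (-(N : ℤ)) N) :
    β * (2 * N + 1 : ℝ) ^ (-α) * |(φ.val x : ℝ)| ^ q ≤
      powerPotential β α q (x, (N : ℤ) + 1) (grad φ.val (x, (N : ℤ) + 1)) := by
  have ⟨neg_le, le⟩ := mem_Icc.1 hx
  have grad_eq : grad φ.val (x, (N : ℤ) + 1) = φ.val x := by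
    rw [grad, φ.apply_eq_zero (x := (N : ℤ) + 1) (by simp), sub_zero]
  have length_eq : bondLength (x, (N : ℤ) + 1) = ((N + 1 - x : ℤ) : ℝ) := by
    rw [bondLength, ← Int.cast_abs, abs_sub_comm, abs_of_pos (by linarith)]
  have length_pos : 0 < ((N + 1 - x : ℤ) : ℝ) := by
    exact_mod_cast (by linarith : 0 < (N + 1 - x : ℤ))
  have length_le : ((N + 1 - x : ℤ) : ℝ) ≤ 2 * N + 1 := by
    exact_mod_cast (by linarith : (N + 1 - x : ℤ) ≤ 2 * N + 1)
  rw [powerPotential, grad_eq, length_eq]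
  have rpow_le := Real.rpow_le_rpow_of_nonpos length_pos length_le (neg_nonpos.2 hα)
  gcongr

lemma mul_sum_abs_rpow_le_bondEnergy (hβ : 0 ≤ β) (hα : 0 ≤ α) {B : Finset (ℤ × ℤ)}
    (hB : boundaryBonds N ⊆ B) (φ : ChainConfig N) :
    β * (2 * N + 1 : ℝ) ^ (-α) * ∑ x ∈ Icc (-(N : ℤ)) N, |(φ.val x : ℝ)| ^ q ≤
      bondEnergy (powerPotential β α q) B φ :=
  calc _ = ∑ x ∈ Icc (-(N : ℤ)) N, β * (2 * N + 1 : ℝ) ^ (-α) * |(φ.val x : ℝ)| ^ q :=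
        mul_sum _ _ _
    _ ≤ ∑ x ∈ Icc (-(N : ℤ)) N,
          powerPotential β α q (x, (N : ℤ) + 1) (grad φ.val (x, (N : ℤ) + 1)) :=
        sum_le_sum fun x hx => mul_abs_rpow_le_powerPotential hβ hα φ hx
    _ = bondEnergy (powerPotential β α q) (boundaryBonds N) φ := by
        rw [bondEnergy, boundaryBonds, sum_image fun x _ y _ h => congrArg Prod.fst h]
    _ ≤ _ := sum_le_sum_of_subset_of_nonneg hB fun p _ _ => powerPotential_nonneg hβ p _

end Summability

section AllBonds

lemma tendsto_tsum_mul_exp_neg {X ι : Type*} {l : Filter ι} {f : X → ℝ} {D E : X → ℝ}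
    {E' : ι → X → ℝ} (hsum : Summable fun x => |f x| * Real.exp (-D x))
    (hlim : ∀ x, Tendsto (fun i => E' i x) l (𝓝 (E x))) (hD : ∀ᶠ i in l, ∀ x, D x ≤ E' i x) :
    Tendsto (fun i => ∑' x, f x * Real.exp (-E' i x)) l (𝓝 (∑' x, f x * Real.exp (-E x))) := by
  refine tendsto_tsum_of_dominated_convergence hsum
    (fun x => ((Real.continuous_exp.tendsto _).comp (hlim x).neg).const_mul (f x)) ?_
  filter_upwards [hD] with i hi x
  rw [norm_mul, Real.norm_eq_abs, Real.norm_of_nonneg (Real.exp_nonneg _)]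
  gcongr
  exact hi x

variable {N : ℕ} {β α q : ℝ}

lemma tendsto_bondEnergy_powerPotential (hq : 0 < q) (hα : 1 < α) (φ : ChainConfig N) :
    Tendsto (fun B => bondEnergy (powerPotential β α q) B φ) atTop
      (𝓝 (chainEnergy β α q φ.val)) := by
  rw [chainEnergy_eq_tsum_powerPotential hq.ne']
  exact (summable_powerPotential hq hα φ).hasSum

lemma summable_mul_exp_neg_sum_abs_rpow (hβ : 0 < β) (hq : 0 < q) {f : ChainConfig N → ℝ}
    (hf : ∀ φ, |f φ| ≤ 1 + originHeight φ ^ 2) :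
    Summable fun φ => |f φ| * Real.exp (-(β * (2 * N + 1 : ℝ) ^ (-α) *
      ∑ x ∈ Icc (-(N : ℤ)) N, |(φ.val x : ℝ)| ^ q)) :=
  (summable_one_add_originHeight_sq_mul_exp_neg (by positivity) hq).of_nonneg_of_le
    (fun φ => by positivity) fun φ => mul_le_mul_of_nonneg_right (hf φ) (Real.exp_nonneg _)

lemma summable_mul_exp_neg_bondEnergy (hβ : 0 < β) (hα : 0 ≤ α) (hq : 0 < q)
    {f : ChainConfig N → ℝ} (hf : ∀ φ, |f φ| ≤ 1 + originHeight φ ^ 2) {B : Finset (ℤ × ℤ)}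
    (hB : boundaryBonds N ⊆ B) :
    Summable fun φ => f φ * Real.exp (-bondEnergy (powerPotential β α q) B φ) := by
  refine (summable_mul_exp_neg_sum_abs_rpow (α := α) hβ hq hf).of_norm_bounded fun φ => ?_
  rw [norm_mul, Real.norm_eq_abs, Real.norm_of_nonneg (Real.exp_nonneg _)]
  gcongr
  exact mul_sum_abs_rpow_le_bondEnergy hβ.le hα hB φ

lemma tendsto_tsum_mul_exp_neg_bondEnergy (hβ : 0 < β) (hα : 1 < α) (hq : 0 < q)
    {f : ChainConfig N → ℝ} (hf : ∀ φ, |f φ| ≤ 1 + originHeight φ ^ 2) :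
    Tendsto (fun B => ∑' φ, f φ * Real.exp (-bondEnergy (powerPotential β α q) B φ)) atTop
      (𝓝 (∑' φ : ChainConfig N, f φ * chainWeight β α q φ.val)) :=
  tendsto_tsum_mul_exp_neg (summable_mul_exp_neg_sum_abs_rpow (α := α) hβ hq hf)
    (tendsto_bondEnergy_powerPotential hq hα)
    ((eventually_ge_atTop (boundaryBonds N)).mono fun _ hB φ =>
      mul_sum_abs_rpow_le_bondEnergy hβ.le (by linarith) hB φ)

lemma abs_one_le_one_add_originHeight_sq (φ : ChainConfig N) :
    |(1 : ℝ)| ≤ 1 + originHeight φ ^ 2 := by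
  rw [abs_one]
  linarith [sq_nonneg (originHeight φ)]

lemma abs_originHeight_sq_le (φ : ChainConfig N) :
    |originHeight φ ^ 2| ≤ 1 + originHeight φ ^ 2 := by
  rw [abs_of_nonneg (sq_nonneg _)]
  linarith

lemma exp_neg_mul_tsum_bondEnergy_le {C : ℝ} (hC₀ : 0 < C)
    (hC : ∀ (k : ℕ) (B : Finset (ℤ × ℤ)),
      ∑ p ∈ B with Crosses k p, bondLength p ^ (-(α - q / 2)) ≤ C)
    (hβ : 0 < β) (hα : 0 ≤ α) (hq₀ : 0 < q) (hq₂ : q ≤ 2) {B : Finset (ℤ × ℤ)}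
    (hB : boundaryBonds N ⊆ B) :
    (N + 1) * Real.exp (-(β * C)) *
        ∑' φ : ChainConfig N, 1 * Real.exp (-bondEnergy (powerPotential β α q) B φ) ≤
      2 * β * C * Real.exp (2 * β * C) * ∑' φ : ChainConfig N,
        originHeight φ ^ 2 * Real.exp (-bondEnergy (powerPotential β α q) B φ) := by
  have potential_eq : smoothPotential β α q - smoothingError β α q = powerPotential β α q :=
    sub_sub_cancel _ _
  have curvature_le (k : Fin (N + 1)) : ∑ p ∈ B with Crosses k p,
      bondLength p * (2 * β * bondLength p ^ (-(α - q / 2) - 1)) ≤ 2 * β * C :=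
    calc _ = ∑ p ∈ B with Crosses k p, 2 * β * bondLength p ^ (-(α - q / 2)) :=
          sum_congr rfl fun p hp => by
            rw [mul_left_comm, (mem_filter.1 hp).2.bondLength_mul_rpow_sub_one]
      _ = 2 * β * ∑ p ∈ B with Crosses k p, bondLength p ^ (-(α - q / 2)) := (mul_sum _ _ _).symm
      _ ≤ 2 * β * C := by gcongr; exact hC k B
  have error_le (k : Fin (N + 1)) (φ : ChainConfig N) :
      ∑ p ∈ B with Crosses k p, smoothingError β α q p (grad φ.val p) ≤ β * C :=
    calc _ ≤ ∑ p ∈ B with Crosses k p, β * bondLength p ^ (-(α - q / 2)) :=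
          sum_le_sum fun p hp => (mem_filter.1 hp).2.smoothingError_le hβ.le hq₀.le hq₂ _
      _ = β * ∑ p ∈ B with Crosses k p, bondLength p ^ (-(α - q / 2)) := (mul_sum _ _ _).symm
      _ ≤ β * C := by gcongr; exact hC k B
  have main := exp_neg_mul_tsum_le_mul_tsum_originHeight_sq (N := N) (B := B)
    (c := fun p => 2 * β * bondLength p ^ (-(α - q / 2) - 1)) (by positivity)
    (smoothingError_nonneg (β := β) (α := α) hβ.le hq₀.le)
    (fun p => mul_nonneg (by positivity) (Real.rpow_nonneg (bondLength_nonneg p) _))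
    (fun k p hk y => hk.smoothPotential_second_difference_le hβ.le hq₀.le hq₂ y)
    curvature_le error_le
  simp only [potential_eq] at main
  simp only [one_mul]
  exact main
    (by simpa only [one_mul] using
      summable_mul_exp_neg_bondEnergy hβ hα hq₀ abs_one_le_one_add_originHeight_sq hB)
    (summable_mul_exp_neg_bondEnergy hβ hα hq₀ abs_originHeight_sq_le hB)

lemma exp_neg_mul_chainZ_le {C : ℝ} (hC₀ : 0 < C)
    (hC : ∀ (k : ℕ) (B : Finset (ℤ × ℤ)),
      ∑ p ∈ B with Crosses k p, bondLength p ^ (-(α - q / 2)) ≤ C)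
    (hβ : 0 < β) (hα : 1 < α) (hq₀ : 0 < q) (hq₂ : q ≤ 2) (N : ℕ) :
    (N + 1) * Real.exp (-(β * C)) * chainZ N β α q ≤
      2 * β * C * Real.exp (2 * β * C) *
        ∑' φ : ChainConfig N, originHeight φ ^ 2 * chainWeight β α q φ.val := by
  have tendsto_one := tendsto_tsum_mul_exp_neg_bondEnergy (N := N) hβ hα hq₀
    abs_one_le_one_add_originHeight_sq
  have tendsto_sq := tendsto_tsum_mul_exp_neg_bondEnergy (N := N) hβ hα hq₀ abs_originHeight_sq_le
  have := le_of_tendsto_of_tendsto (tendsto_one.const_mul _) (tendsto_sq.const_mul _)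
    ((eventually_ge_atTop (boundaryBonds N)).mono fun B hB =>
      exp_neg_mul_tsum_bondEnergy_le hC₀ hC hβ (zero_le_one.trans hα.le) hq₀ hq₂ hB)
  simpa only [one_mul, chainZ] using this

end AllBonds

section Variance

variable {β α q : ℝ}

lemma summable_chainWeight (hβ : 0 < β) (hα : 1 < α) (hq : 0 < q) (N : ℕ) :
    Summable fun φ : ChainConfig N => chainWeight β α q φ.val := by
  refine (summable_mul_exp_neg_sum_abs_rpow (α := α) hβ hq
    abs_one_le_one_add_originHeight_sq).of_nonneg_of_le (fun φ => Real.exp_nonneg _) fun φ => ?_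
  rw [abs_one, one_mul, chainWeight]
  gcongr
  exact ge_of_tendsto (tendsto_bondEnergy_powerPotential hq hα φ)
    ((eventually_ge_atTop (boundaryBonds N)).mono fun B hB =>
      mul_sum_abs_rpow_le_bondEnergy hβ.le (by linarith) hB φ)

lemma chainZ_pos (hβ : 0 < β) (hα : 1 < α) (hq : 0 < q) (N : ℕ) : 0 < chainZ N β α q :=
  (summable_chainWeight hβ hα hq N).tsum_pos (fun _ => Real.exp_nonneg _)
    (⟨0, fun _ _ => rfl⟩ : ChainConfig N) (Real.exp_pos _)

/-- The spin flip `φ ↦ -φ` of the chain. -/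
def ChainConfig.negEquiv (N : ℕ) : ChainConfig N ≃ ChainConfig N :=
  (Equiv.neg (ℤ → ℤ)).subtypeEquiv fun φ => by simp

lemma chainWeight_neg (φ : ℤ → ℤ) : chainWeight β α q (-φ) = chainWeight β α q φ := by
  simp only [chainWeight, chainEnergy, Pi.neg_apply, Int.cast_sub, neg_sub_neg,
    abs_sub_comm]

lemma chainMean_eq_zero (N : ℕ) : chainMean N β α q = 0 := by
  have odd : ∑' φ : ChainConfig N, (φ.val 0 : ℝ) * chainWeight β α q φ.val =
      -∑' φ : ChainConfig N, (φ.val 0 : ℝ) * chainWeight β α q φ.val := by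
    rw [← tsum_neg, ← (ChainConfig.negEquiv N).tsum_eq]
    refine tsum_congr fun φ => ?_
    have val_neg : (ChainConfig.negEquiv N φ).val = -φ.val := rfl
    rw [val_neg, chainWeight_neg, Pi.neg_apply, Int.cast_neg, neg_mul]
  rw [chainMean, self_eq_neg.1 odd, zero_div]

theorem qSOS_chain_lower_bound_alpha_gt_critical_general (hβ : 0 < β) (hq₀ : 0 < q) (hq₂ : q ≤ 2)
    (hα : 2 + q / 2 < α) : ∃ c : ℝ, 0 < c ∧ ∀ N : ℕ, c * (N + 1) ≤ chainVar N β α q := by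
  obtain ⟨C, hC₀, hC⟩ := exists_forall_sum_crosses_le (γ := α - q / 2) (by linarith)
  have one_lt_α : 1 < α := by linarith
  refine ⟨Real.exp (-(β * C)) / (2 * β * C * Real.exp (2 * β * C)), by positivity, fun N => ?_⟩
  rw [chainVar, chainMean_eq_zero, zero_pow two_ne_zero, sub_zero,
    le_div_iff₀ (chainZ_pos hβ one_lt_α hq₀ N), div_mul_eq_mul_div, div_mul_eq_mul_div,
    div_le_iff₀' (by positivity), mul_comm (Real.exp _)]
  exact exp_neg_mul_chainZ_le hC₀ hC hβ one_lt_α hq₀ hq₂ N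

end Variance

/-- **Linear lower bound for the `q`-SOS long-range chain for `α > 2 + q/2`.**
For every `β ∈ (0,∞)`, every `q ∈ (0,2)` and every `α > 2 + q/2`, there exists `c_β > 0`
such that for every `N ≥ 1`, `c_β N ≤ Var^{q-SOS}_{N,β,α}[φ(0)]`. -/
theorem qSOS_chain_lower_bound_alpha_gt_critical
    (β : ℝ) (hβ : 0 < β) (q : ℝ) (hq₀ : 0 < q) (hq₂ : q < 2)
    (α : ℝ) (hα : 2 + q / 2 < α) :
    ∃ c : ℝ, 0 < c ∧
      ∀ N : ℕ, 1 ≤ N → c * (N : ℝ) ≤ chainVar N β α q := by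
  obtain ⟨c, hc, le_var⟩ := qSOS_chain_lower_bound_alpha_gt_critical_general hβ hq₀ hq₂.le hα
  exact ⟨c, hc, fun N _ => (by gcongr; linarith : c * N ≤ c * (N + 1)).trans (le_var N)⟩
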